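/- arXiv:1206.6139 — 2 statements merged into one kernel-verified Lean document; each statement's English description precedes it below -/
import Mathlib

section
/- Let f₁, f₂, f₃ : (Z/15Z)* → [0,1] be arbitrary functions and set Fᵢ = ∑_{x ∈ (Z/15Z)*} fᵢ(x). Suppose F₁F₂ + F₂F₃ + F₃F₁ > 5(F₁ + F₂ + F₃). Then for every x ∈ Z/15Z there exist units a₁, a₂, a₃ ∈ (Z/15Z)* with x = a₁ + a₂ + a₃ such that f₁(a₁)f₂(a₂)f₃(a₃) > 0 and f₁(a₁) + f₂(a₂) + f₃(a₃) > 3/2. -/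
/-- Admissible triples of sizes. -/
def GoodT (i j k : ℕ) : Prop :=
  0 < i ∧ 0 < j ∧ 0 < k ∧ i + j + k = 15 ∧ ¬ (i = 5 ∧ j = 5) ∧ ¬ (i = 4 ∧ j = 4) ∧ ¬ (i = 4 ∧ k = 4) ∧ ¬ (j = 4 ∧ k = 4) ∧
    ¬ (i = 4 ∧ j = 3) ∧ ¬ (i = 4 ∧ k = 3) ∧ ¬ (j = 4 ∧ k = 3) ∧
    ¬ (i = 3 ∧ j = 4) ∧ ¬ (i = 3 ∧ k = 4) ∧ ¬ (j = 3 ∧ k = 4)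

lemma GoodT.s12 {i j k : ℕ} (h : GoodT i j k) : GoodT j i k := by
  unfold GoodT at *; omega

lemma GoodT.s23 {i j k : ℕ} (h : GoodT i j k) : GoodT i k j := by
  unfold GoodT at *; omega

lemma split_sizes (i j k a1 a2 b1 b2 c1 c2 : ℕ) (hi : i ≤ 8) (hj : j ≤ 8) (hk : k ≤ 8)
    (hg : GoodT i j k) (ha : a1 + a2 = i) (hb : b1 + b2 = j) (hc : c1 + c2 = k)
    (ha1 : a1 ≤ 4) (ha2 : a2 ≤ 4) (hb1 : b1 ≤ 4) (hb2 : b2 ≤ 4) (hc1 : c1 ≤ 4) (hc2 : c2 ≤ 4) :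
    ((0 < a1 ∧ 0 < b1 ∧ 0 < c1 ∧ 7 ≤ a1 + b1 + c1) ∨ (0 < a2 ∧ 0 < b2 ∧ 0 < c2 ∧ 7 ≤ a2 + b2 + c2)) ∧
    ((0 < a1 ∧ 0 < b1 ∧ 0 < c2 ∧ 7 ≤ a1 + b1 + c2) ∨ (0 < a1 ∧ 0 < b2 ∧ 0 < c1 ∧ 7 ≤ a1 + b2 + c1) ∨
      (0 < a2 ∧ 0 < b1 ∧ 0 < c1 ∧ 7 ≤ a2 + b1 + c1)) ∧
    ((0 < a2 ∧ 0 < b2 ∧ 0 < c1 ∧ 7 ≤ a2 + b2 + c1) ∨ (0 < a2 ∧ 0 < b1 ∧ 0 < c2 ∧ 7 ≤ a2 + b1 + c2) ∨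
      (0 < a1 ∧ 0 < b2 ∧ 0 < c2 ∧ 7 ≤ a1 + b2 + c2)) := by
  unfold GoodT at hg
  interval_cases i <;> interval_cases j <;> first
    | (exfalso; omega)
    | (refine ⟨?_, ?_, ?_⟩ <;> omega)

lemma cd3 (A B C : Finset (ZMod 5)) (hA : 0 < A.card) (hB : 0 < B.card) (hC : 0 < C.card)
    (h : 7 ≤ A.card + B.card + C.card) (x : ZMod 5) :
    ∃ a ∈ A, ∃ b ∈ B, ∃ c ∈ C, a + b + c = x := by
  open scoped Pointwise in
  have : Fact (Nat.Prime 5) := ⟨by norm_num⟩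
  have hA' := Finset.card_pos.1 hA
  have hB' := Finset.card_pos.1 hB
  have hC' := Finset.card_pos.1 hC
  have h1 := ZMod.cauchy_davenport (p := 5) (by norm_num) hA' hB'
  have h2 := ZMod.cauchy_davenport (p := 5) (by norm_num) (hA'.add hB') hC'
  have h3 : 5 ≤ (A + B + C).card := by omega
  have h4 : A + B + C = Finset.univ := by
    apply Finset.eq_univ_of_card
    have := Finset.card_le_univ (A + B + C)
    have h5 : Fintype.card (ZMod 5) = 5 := ZMod.card 5
    omega
  have h6 : x ∈ A + B + C := by rw [h4]; exact Finset.mem_univ x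
  rw [Finset.mem_add] at h6
  obtain ⟨y, hy, c, hc, e⟩ := h6
  rw [Finset.mem_add] at hy
  obtain ⟨a, ha, b, hb, e'⟩ := hy
  exact ⟨a, ha, b, hb, c, hc, by rw [e', e]⟩

/-- reduction mod 3 -/
def r3 : ZMod 15 →+* ZMod 3 := ZMod.castHom (by norm_num) (ZMod 3)
/-- reduction mod 5 -/
def r5 : ZMod 15 →+* ZMod 5 := ZMod.castHom (by norm_num) (ZMod 5)

lemma crt_inj : ∀ u v : ZMod 15, r3 u = r3 v → r5 u = r5 v → u = v := by decide

lemma unit3 (u : (ZMod 15)ˣ) : r3 u = 1 ∨ r3 u = 2 := by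
  have h : ∀ u v : ZMod 15, u * v = 1 → r3 u = 1 ∨ r3 u = 2 := by decide
  exact h _ _ u.mul_inv

lemma unit5 (u : (ZMod 15)ˣ) : r5 u ≠ 0 := by
  have h : ∀ u v : ZMod 15, u * v = 1 → r5 u ≠ 0 := by decide
  exact h _ _ u.mul_inv

/-- residues mod 5 of the part of `A` in a given class mod 3 -/
def cls (A : Finset (ZMod 15)ˣ) (e : ZMod 3) : Finset (ZMod 5) :=
  (A.filter (fun u : (ZMod 15)ˣ => r3 u = e)).image (fun u : (ZMod 15)ˣ => r5 u)

lemma cls_card (A : Finset (ZMod 15)ˣ) (e : ZMod 3) :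
    (cls A e).card = (A.filter (fun u : (ZMod 15)ˣ => r3 u = e)).card := by
  apply Finset.card_image_of_injOn
  intro u hu v hv h
  simp only [Finset.coe_filter, Set.mem_ofPred_eq] at hu hv
  exact Units.ext (crt_inj _ _ (hu.2.trans hv.2.symm) h)

lemma cls_le (A : Finset (ZMod 15)ˣ) (e : ZMod 3) : (cls A e).card ≤ 4 := by
  have : cls A e ⊆ Finset.univ.erase 0 := by
    intro y hy
    simp only [cls, Finset.mem_image] at hy
    obtain ⟨u, -, rfl⟩ := hy
    simp [unit5]
  exact (Finset.card_le_card this).trans (by decide)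

lemma cls_sum (A : Finset (ZMod 15)ˣ) : (cls A 1).card + (cls A 2).card = A.card := by
  rw [cls_card, cls_card, ← Finset.card_union_of_disjoint, ← Finset.filter_or]
  · congr 1
    apply Finset.filter_true_of_mem
    intro u _
    exact unit3 u
  · rw [Finset.disjoint_filter]
    intro u _ h h'
    rw [h] at h'
    exact absurd h' (by decide)

lemma pat (A B C : Finset (ZMod 15)ˣ) (x : ZMod 15) (e1 e2 e3 : ZMod 3) (he : e1 + e2 + e3 = r3 x)
    (h : 0 < (cls A e1).card ∧ 0 < (cls B e2).card ∧ 0 < (cls C e3).card ∧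
      7 ≤ (cls A e1).card + (cls B e2).card + (cls C e3).card) :
    ∃ a ∈ A, ∃ b ∈ B, ∃ c ∈ C, x = (a : ZMod 15) + (b : ZMod 15) + (c : ZMod 15) := by
  obtain ⟨p, hp, q, hq, r, hr, e⟩ := cd3 _ _ _ h.1 h.2.1 h.2.2.1 h.2.2.2 (r5 x)
  simp only [cls, Finset.mem_image, Finset.mem_filter] at hp hq hr
  obtain ⟨a, ⟨ha, ha'⟩, rfl⟩ := hp
  obtain ⟨b, ⟨hb, hb'⟩, rfl⟩ := hq
  obtain ⟨c, ⟨hc, hc'⟩, rfl⟩ := hr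
  refine ⟨a, ha, b, hb, c, hc, crt_inj _ _ ?_ ?_⟩
  · rw [map_add, map_add, ha', hb', hc', he]
  · rw [map_add, map_add, e]

lemma comb (A B C : Finset (ZMod 15)ˣ) (x : ZMod 15) (hg : GoodT A.card B.card C.card) :
    ∃ a ∈ A, ∃ b ∈ B, ∃ c ∈ C, x = (a : ZMod 15) + (b : ZMod 15) + (c : ZMod 15) := by
  have a1 := cls_le A 1
  have a2 := cls_le A 2
  have b1 := cls_le B 1
  have b2 := cls_le B 2
  have c1 := cls_le C 1
  have c2 := cls_le C 2
  have sa := cls_sum A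
  have sb := cls_sum B
  have sc := cls_sum C
  obtain ⟨h0, h1, h2⟩ := split_sizes _ _ _ _ _ _ _ _ _ (by omega) (by omega) (by omega) hg sa sb sc
    a1 a2 b1 b2 c1 c2
  have hx : ∀ y : ZMod 3, y = 0 ∨ y = 1 ∨ y = 2 := by decide
  rcases hx (r3 x) with e | e | e
  · rcases h0 with h | h
    · exact pat A B C x _ _ _ (by rw [e]; decide) h
    · exact pat A B C x _ _ _ (by rw [e]; decide) h
  · rcases h1 with h | h | h
    · exact pat A B C x _ _ _ (by rw [e]; decide) h
    · exact pat A B C x _ _ _ (by rw [e]; decide) h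
    · exact pat A B C x _ _ _ (by rw [e]; decide) h
  · rcases h2 with h | h | h
    · exact pat A B C x _ _ _ (by rw [e]; decide) h
    · exact pat A B C x _ _ _ (by rw [e]; decide) h
    · exact pat A B C x _ _ _ (by rw [e]; decide) h

/-- A decreasing sequence in `[0,1]` with support of length `s`. -/
structure Dec (a : Fin 8 → ℝ) (s : ℕ) : Prop where
  anti : Antitone a
  nonneg : ∀ i, 0 ≤ a i
  le_one : ∀ i, a i ≤ 1
  le8 : s ≤ 8
  zero : ∀ i : Fin 8, s ≤ i.val → a i = 0
  pos : ∀ i : Fin 8, i.val < s → 0 < a i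

lemma sorted (f : (ZMod 15)ˣ → ℝ) (h : ∀ x, f x ∈ Set.Icc (0 : ℝ) 1) :
    ∃ (a : Fin 8 → ℝ) (s : ℕ), Dec a s ∧ ∑ i, a i = ∑ x, f x ∧
      ∀ i : Fin 8, ∃ A : Finset (ZMod 15)ˣ, A.card = i.val + 1 ∧ ∀ u ∈ A, a i ≤ f u := by
  have hc : Fintype.card (ZMod 15)ˣ = 8 := by
    rw [ZMod.card_units_eq_totient]; decide
  let e := Fintype.equivFinOfCardEq hc
  let g : Fin 8 → ℝ := fun i => - f (e.symm i)
  let τ : Fin 8 ≃ (ZMod 15)ˣ := (Tuple.sort g).trans e.symm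
  have hm : Antitone (fun i => f (τ i)) := by
    intro i j hij
    have := Tuple.monotone_sort g hij
    simp only [Function.comp, g] at this
    simp only [τ, Equiv.trans_apply]
    linarith
  have hex : ∃ s : ℕ, ∀ i : Fin 8, s ≤ i.val → f (τ i) = 0 :=
    ⟨8, fun i hi => absurd i.isLt (by omega)⟩
  classical
  refine ⟨fun i => f (τ i), Nat.find hex, ⟨hm, fun i => (h _).1, fun i => (h _).2, ?_, ?_, ?_⟩, ?_, ?_⟩
  · exact Nat.find_min' hex (fun i hi => absurd i.isLt (by omega))
  · exact Nat.find_spec hex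
  · intro i hi
    have := Nat.find_min hex hi
    push Not at this
    obtain ⟨j, hj, hne⟩ := this
    have h1 : f (τ j) ≤ f (τ i) := hm (Fin.le_def.2 hj)
    have h2 : 0 < f (τ j) := lt_of_le_of_ne (h _).1 (Ne.symm hne)
    exact lt_of_lt_of_le h2 h1
  · exact Equiv.sum_comp τ f
  · intro i
    refine ⟨(Finset.Iic i).map τ.toEmbedding, ?_, ?_⟩
    · rw [Finset.card_map, Fin.card_Iic]
    · intro u hu
      rw [Finset.mem_map] at hu
      obtain ⟨j, hj, rfl⟩ := hu
      exact hm (Finset.mem_Iic.1 hj)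

lemma pair_gt (x y z : ℝ) (hy : 0 ≤ y) (hz : 0 ≤ z) (hx : 0 ≤ x)
    (h : x * y + y * z + z * x > 5 * (x + y + z)) : 5 < y + z := by
  by_contra hn
  push Not at hn
  nlinarith [mul_nonneg hx (sub_nonneg.2 hn), mul_nonneg hy (sub_nonneg.2 hn),
    mul_nonneg hz (sub_nonneg.2 hn), mul_nonneg hy hz, sq_nonneg (y - z), sq_nonneg y, sq_nonneg z]

lemma mono_Q (x y z X Y Z : ℝ) (hx : 0 ≤ x) (hy : 0 ≤ y) (hz : 0 ≤ z) (hX : x ≤ X) (hY : y ≤ Y)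
    (hZ : z ≤ Z) (h : x * y + y * z + z * x > 5 * (x + y + z)) :
    X * Y + Y * Z + Z * X > 5 * (X + Y + Z) := by
  have h1 := pair_gt x y z hy hz hx h
  have h2 := pair_gt y z x hz hx hy (by linarith)
  have h3 := pair_gt z x y hx hy hz (by linarith)
  nlinarith [mul_nonneg (sub_nonneg.2 hX) (sub_nonneg.2 h1.le),
    mul_nonneg (sub_nonneg.2 hY) (sub_nonneg.2 h2.le),
    mul_nonneg (sub_nonneg.2 hZ) (sub_nonneg.2 h3.le),
    mul_nonneg (sub_nonneg.2 hX) (sub_nonneg.2 hY), mul_nonneg (sub_nonneg.2 hY) (sub_nonneg.2 hZ),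
    mul_nonneg (sub_nonneg.2 hX) (sub_nonneg.2 hZ)]

lemma Dec.sum_le {a : Fin 8 → ℝ} {s : ℕ} (h : Dec a s) : ∑ i, a i ≤ s := by
  have h1 : ∀ i : Fin 8, a i ≤ if i.val < s then 1 else 0 := by
    intro i
    split_ifs with hi
    · exact h.le_one i
    · exact (h.zero i (by omega)).le
  refine (Finset.sum_le_sum fun i _ => h1 i).trans ?_
  have h8 := h.le8
  clear h h1
  interval_cases s <;> norm_num [Fin.sum_univ_eight, -Finset.sum_boole]

/-- The constraint satisfied by the three sequences. -/
def Cstr (a b c : Fin 8 → ℝ) (s t r : ℕ) : Prop :=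
  ∀ i j k : Fin 8, GoodT (i.val + 1) (j.val + 1) (k.val + 1) → i.val < s → j.val < t → k.val < r →
    a i + b j + c k ≤ 3 / 2

lemma Cstr.swap12 {a b c : Fin 8 → ℝ} {s t r : ℕ} (h : Cstr a b c s t r) : Cstr b a c t s r := by
  intro i j k hg hi hj hk
  have := h j i k hg.s12 hj hi hk
  linarith

lemma Cstr.swap23 {a b c : Fin 8 → ℝ} {s t r : ℕ} (h : Cstr a b c s t r) : Cstr a c b s r t := by
  intro i j k hg hi hj hk
  have := h i k j hg.s23 hi hk hj
  linarith

lemma Dec.chain {a : Fin 8 → ℝ} {s : ℕ} (h : Dec a s) :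
    a 0 ≤ 1 ∧ a 1 ≤ a 0 ∧ a 2 ≤ a 1 ∧ a 3 ≤ a 2 ∧ a 4 ≤ a 3 ∧ a 5 ≤ a 4 ∧ a 6 ≤ a 5 ∧ a 7 ≤ a 6 ∧
      0 ≤ a 7 := by
  refine ⟨h.le_one _, ?_, ?_, ?_, ?_, ?_, ?_, ?_, h.nonneg _⟩ <;> exact h.anti (by decide)

lemma Dec.zeros {a : Fin 8 → ℝ} {s : ℕ} (h : Dec a s) :
    (s ≤ 2 → a 2 = 0) ∧ (s ≤ 3 → a 3 = 0) ∧ (s ≤ 4 → a 4 = 0) ∧ (s ≤ 5 → a 5 = 0) ∧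
      (s ≤ 6 → a 6 = 0) ∧ (s ≤ 7 → a 7 = 0) :=
  ⟨h.zero 2, h.zero 3, h.zero 4, h.zero 5, h.zero 6, h.zero 7⟩

/-- One constraint, in all six orders. -/
lemma Cstr.six {a b c : Fin 8 → ℝ} {s t r : ℕ} (h : Cstr a b c s t r) (i j k : Fin 8)
    (hg : GoodT (i.val + 1) (j.val + 1) (k.val + 1)) :
    (i.val < s ∧ j.val < t ∧ k.val < r → a i + b j + c k ≤ 3 / 2) ∧
    (i.val < s ∧ k.val < t ∧ j.val < r → a i + b k + c j ≤ 3 / 2) ∧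
    (j.val < s ∧ i.val < t ∧ k.val < r → a j + b i + c k ≤ 3 / 2) ∧
    (j.val < s ∧ k.val < t ∧ i.val < r → a j + b k + c i ≤ 3 / 2) ∧
    (k.val < s ∧ i.val < t ∧ j.val < r → a k + b i + c j ≤ 3 / 2) ∧
    (k.val < s ∧ j.val < t ∧ i.val < r → a k + b j + c i ≤ 3 / 2) := by
  exact ⟨fun p => h i j k hg p.1 p.2.1 p.2.2, fun p => h i k j hg.s23 p.1 p.2.1 p.2.2,
    fun p => h j i k hg.s12 p.1 p.2.1 p.2.2, fun p => h j k i hg.s12.s23 p.1 p.2.1 p.2.2,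
    fun p => h k i j hg.s23.s12 p.1 p.2.1 p.2.2, fun p => h k j i hg.s23.s12.s23 p.1 p.2.1 p.2.2⟩

set_option maxHeartbeats 8000000 in
lemma core_sum {a b c : Fin 8 → ℝ} {s t r : ℕ} (ha : Dec a s) (hb : Dec b t) (hc : Dec c r)
    (h : Cstr a b c s t r) (hst : s ≤ t) (htr : t ≤ r) (hQ : 5 * (s + t + r) < s * t + t * r + r * s) :
    ∑ i, a i + ∑ i, b i + ∑ i, c i ≤ 15 := by
  simp only [Fin.sum_univ_eight]
  have s8 := ha.le8
  have t8 := hb.le8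
  have r8 := hc.le8
  have ca := ha.chain
  have cb := hb.chain
  have cc := hc.chain
  have za := ha.zeros
  have zb := hb.zeros
  have zc := hc.zeros
  have g1 := h.six 0 5 7 (by unfold GoodT; decide)
  have g2 := h.six 0 6 6 (by unfold GoodT; decide)
  have g3 := h.six 1 4 7 (by unfold GoodT; decide)
  have g4 := h.six 1 5 6 (by unfold GoodT; decide)
  have g5 := h.six 2 4 6 (by unfold GoodT; decide)
  have g6 := h.six 2 5 5 (by unfold GoodT; decide)
  have g7 := h.six 3 4 5 (by unfold GoodT; decide)
  clear ha hb hc h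
  have s2 : 2 ≤ s := by
    by_contra hs
    have : s = 0 ∨ s = 1 := by omega
    rcases this with rfl | rfl <;> nlinarith
  generalize a 0 = a0, a 1 = a1, a 2 = a2, a 3 = a3, a 4 = a4, a 5 = a5, a 6 = a6, a 7 = a7 at *
  generalize b 0 = b0, b 1 = b1, b 2 = b2, b 3 = b3, b 4 = b4, b 5 = b5, b 6 = b6, b 7 = b7 at *
  generalize c 0 = c0, c 1 = c1, c 2 = c2, c 3 = c3, c 4 = c4, c 5 = c5, c 6 = c6, c 7 = c7 at *
  interval_cases s <;> interval_cases t <;> try (exfalso; omega)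
  all_goals
    interval_cases r <;> first
      | (exfalso; omega)
      | (norm_num at za zb zc g1 g2 g3 g4 g5 g6 g7
         casesm* _ ∧ _
         linarith)

lemma core_sorted {a b c : Fin 8 → ℝ} {s t r : ℕ} (ha : Dec a s) (hb : Dec b t) (hc : Dec c r)
    (h : Cstr a b c s t r) (hst : s ≤ t) (htr : t ≤ r) (x y z : ℝ) (hx : x = ∑ i, a i)
    (hy : y = ∑ i, b i) (hz : z = ∑ i, c i) :
    ¬ (x * y + y * z + z * x > 5 * (x + y + z)) := by
  intro hq
  have x0 : 0 ≤ x := hx ▸ Finset.sum_nonneg fun i _ => ha.nonneg i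
  have y0 : 0 ≤ y := hy ▸ Finset.sum_nonneg fun i _ => hb.nonneg i
  have z0 : 0 ≤ z := hz ▸ Finset.sum_nonneg fun i _ => hc.nonneg i
  have h1 := mono_Q x y z s t r x0 y0 z0 (hx ▸ ha.sum_le) (hy ▸ hb.sum_le) (hz ▸ hc.sum_le) hq
  have h2 : 5 * (s + t + r) < s * t + t * r + r * s := by exact_mod_cast h1
  have h3 := core_sum ha hb hc h hst htr h2
  rw [← hx, ← hy, ← hz] at h3
  nlinarith [sq_nonneg (x - y), sq_nonneg (y - z), sq_nonneg (x - z),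
    mul_nonneg (add_nonneg (add_nonneg x0 y0) z0) (sub_nonneg.2 h3)]

lemma core {a b c : Fin 8 → ℝ} {s t r : ℕ} (ha : Dec a s) (hb : Dec b t) (hc : Dec c r)
    (h : Cstr a b c s t r) (x y z : ℝ) (hx : x = ∑ i, a i)
    (hy : y = ∑ i, b i) (hz : z = ∑ i, c i) :
    ¬ (x * y + y * z + z * x > 5 * (x + y + z)) := by
  intro hq
  rcases le_total s t with h1 | h1 <;> rcases le_total t r with h2 | h2 <;>
    rcases le_total s r with h3 | h3
  · exact core_sorted ha hb hc h h1 h2 x y z hx hy hz hq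
  · exact core_sorted ha hb hc h h1 h2 x y z hx hy hz hq
  · exact core_sorted ha hc hb h.swap23 h3 h2 x z y hx hz hy (by linarith)
  · exact core_sorted hc ha hb h.swap23.swap12 h3 h1 z x y hz hx hy (by linarith)
  · exact core_sorted hb ha hc h.swap12 h1 h3 y x z hy hx hz (by linarith)
  · exact core_sorted hb hc ha h.swap12.swap23 h2 h3 y z x hy hz hx (by linarith)
  · exact core_sorted hc hb ha h.swap12.swap23.swap12 h2 h1 z y x hz hy hx (by linarith)
  · exact core_sorted hc hb ha h.swap12.swap23.swap12 h2 h1 z y x hz hy hx (by linarith)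


/-- Proposition: let `f₁, f₂, f₃ : (ℤ/15ℤ)* → [0,1]` with `Fᵢ = ∑ fᵢ` satisfying
`F₁F₂ + F₂F₃ + F₃F₁ > 5(F₁ + F₂ + F₃)`. Then every `x ∈ ℤ/15ℤ` is `a₁ + a₂ + a₃` with the
`aᵢ` units, `f₁(a₁)f₂(a₂)f₃(a₃) > 0` and `f₁(a₁) + f₂(a₂) + f₃(a₃) > 3/2`. -/
theorem stmt13 (f₁ f₂ f₃ : (ZMod 15)ˣ → ℝ)
    (h₁ : ∀ x, f₁ x ∈ Set.Icc (0 : ℝ) 1)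
    (h₂ : ∀ x, f₂ x ∈ Set.Icc (0 : ℝ) 1)
    (h₃ : ∀ x, f₃ x ∈ Set.Icc (0 : ℝ) 1)
    (F₁ F₂ F₃ : ℝ)
    (hF₁ : F₁ = ∑ x : (ZMod 15)ˣ, f₁ x)
    (hF₂ : F₂ = ∑ x : (ZMod 15)ˣ, f₂ x)
    (hF₃ : F₃ = ∑ x : (ZMod 15)ˣ, f₃ x)
    (hcond : F₁ * F₂ + F₂ * F₃ + F₃ * F₁ > 5 * (F₁ + F₂ + F₃)) :
    ∀ x : ZMod 15, ∃ a₁ a₂ a₃ : (ZMod 15)ˣ,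
      x = (a₁ : ZMod 15) + (a₂ : ZMod 15) + (a₃ : ZMod 15) ∧
      f₁ a₁ * f₂ a₂ * f₃ a₃ > 0 ∧ f₁ a₁ + f₂ a₂ + f₃ a₃ > 3 / 2 := by
  intro x
  by_contra hno
  push Not at hno
  obtain ⟨a, s, ha, ea, la⟩ := sorted f₁ h₁
  obtain ⟨b, t, hb, eb, lb⟩ := sorted f₂ h₂
  obtain ⟨c, r, hc, ec, lc⟩ := sorted f₃ h₃
  refine core ha hb hc ?_ F₁ F₂ F₃ (hF₁.trans ea.symm) (hF₂.trans eb.symm) (hF₃.trans ec.symm) hcond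
  intro i j k hg hi hj hk
  obtain ⟨A, cA, lA⟩ := la i
  obtain ⟨B, cB, lB⟩ := lb j
  obtain ⟨C, cC, lC⟩ := lc k
  obtain ⟨u, hu, v, hv, w, hw, e⟩ := comb A B C x (by rw [cA, cB, cC]; exact hg)
  have pu := lt_of_lt_of_le (ha.pos i hi) (lA u hu)
  have pv := lt_of_lt_of_le (hb.pos j hj) (lB v hv)
  have pw := lt_of_lt_of_le (hc.pos k hk) (lC w hw)
  have := hno u v w e (mul_pos (mul_pos pu pv) pw)
  linarith [lA u hu, lB v hv, lC w hw]
end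

section
/- For every θ > 0 there exist N(θ) and c(θ) > 0 such that the following holds for every prime N ≥ N(θ). Let X₁, X₂, X₃ ⊆ Z/NZ and set θᵢ = |Xᵢ|/N. Suppose min(θ₁, θ₂, θ₃, θ₁ + θ₂ + θ₃ − 1) ≥ θ. Then for every x ∈ Z/NZ there are at least c(θ)·N² triples (x₁, x₂, x₃) with xᵢ ∈ Xᵢ and x = x₁ + x₂ + x₃. -/
open Finset in
/-- number of representations of x as a + b -/
def repr17 {N : ℕ} (A B : Finset (ZMod N)) (x : ZMod N) : ℕ := (A.filter (fun a => x - a ∈ B)).card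

theorem repr17_eq {N : ℕ} [NeZero N] (A B : Finset (ZMod N)) (x : ZMod N) :
    repr17 A B x = ∑ a : ZMod N, (if a ∈ A then 1 else 0) * (if x - a ∈ B then 1 else 0) := by
  unfold repr17
  have : A.filter (fun a => x - a ∈ B) = Finset.univ.filter (fun a => a ∈ A ∧ x - a ∈ B) := by
    ext a
    simp
  rw [this, Finset.card_filter]
  apply Finset.sum_congr rfl
  intro a _
  by_cases h1 : a ∈ A <;> by_cases h2 : x - a ∈ B <;> simp [h1, h2]

theorem repr17_le {N : ℕ} [NeZero N] (A B : Finset (ZMod N)) (x : ZMod N) :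
    repr17 A B x ≤ B.card := by
  unfold repr17
  apply Finset.card_le_card_of_injOn (fun a => x - a)
  · intro a ha
    simp at ha
    simpa using ha.2
  · intro a _ b _ h
    simpa using h

theorem repr17_mono {N : ℕ} [NeZero N] (A B B' : Finset (ZMod N)) (h : B' ⊆ B) (x : ZMod N) :
    repr17 A B' x ≤ repr17 A B x := by
  unfold repr17
  apply Finset.card_le_card
  intro a
  simp only [Finset.mem_filter]
  exact fun ⟨h1, h2⟩ => ⟨h1, h h2⟩

theorem repr17_sum {N : ℕ} [NeZero N] (A B : Finset (ZMod N)) :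
    ∑ x, repr17 A B x = A.card * B.card := by
  simp only [repr17_eq]
  rw [Finset.sum_comm]
  simp only [← Finset.mul_sum]
  have : ∀ a : ZMod N, ∑ x : ZMod N, (if x - a ∈ B then 1 else 0) = B.card := by
    intro a
    refine (Equiv.sum_comp (Equiv.subRight a) (fun y => if y ∈ B then 1 else 0)).trans ?_
    simp
  simp [this]

theorem repr17_split {N : ℕ} [NeZero N] (A B : Finset (ZMod N)) (x : ZMod N) :
    repr17 A B x = repr17 (A ∪ B) (A ∩ B) x + repr17 (A \ B) (B \ A) x := by
  have hsymm : ∑ a : ZMod N, (if a ∈ B ∧ a ∉ A then 1 else 0) * (if x - a ∈ A ∩ B then 1 else 0)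
      = ∑ a : ZMod N, (if a ∈ A ∩ B then 1 else 0) * (if x - a ∈ B ∧ x - a ∉ A then 1 else 0) := by
    rw [← Equiv.sum_comp (Equiv.subLeft x)]
    apply Finset.sum_congr rfl
    intro a _
    simp [mul_comm]
  have h1 : repr17 (A ∪ B) (A ∩ B) x =
      ∑ a : ZMod N, (if a ∈ A then 1 else 0) * (if x - a ∈ A ∩ B then 1 else 0) +
      ∑ a : ZMod N, (if a ∈ B ∧ a ∉ A then 1 else 0) * (if x - a ∈ A ∩ B then 1 else 0) := by
    rw [repr17_eq, ← Finset.sum_add_distrib]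
    apply Finset.sum_congr rfl
    intro a _
    by_cases ha : a ∈ A <;> by_cases hb : a ∈ B <;> simp [ha, hb]
  rw [h1, hsymm, repr17_eq, repr17_eq, ← Finset.sum_add_distrib, ← Finset.sum_add_distrib]
  apply Finset.sum_congr rfl
  intro a _
  by_cases ha : a ∈ A <;> by_cases hb : a ∈ B <;> by_cases ha' : x - a ∈ A <;>
    by_cases hb' : x - a ∈ B <;> simp [ha, hb, ha', hb']

theorem repr17_shift {N : ℕ} [NeZero N] (A B : Finset (ZMod N)) (e : ZMod N) (t : ℕ) :
    ∑ x, min t (repr17 A (B.image (· + e)) x) = ∑ x, min t (repr17 A B x) := by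
  rw [← Equiv.sum_comp (Equiv.addRight e)]
  apply Finset.sum_congr rfl
  intro x _
  congr 1
  unfold repr17
  congr 1
  ext a
  simp only [Finset.mem_filter, Finset.mem_image, Equiv.coe_addRight]
  apply and_congr_right
  intro _
  constructor
  · rintro ⟨b, hb, h⟩
    have : x - a = b := by linear_combination -h
    rwa [this]
  · intro h
    exact ⟨_, h, by ring⟩

theorem pollard17 {N : ℕ} [NeZero N] (hN : N.Prime) (n : ℕ) : ∀ (A B : Finset (ZMod N)) (t : ℕ),
    B.card = n → t ≤ A.card → t ≤ B.card → A.card + B.card ≤ N + t →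
    t * (A.card + B.card) ≤ ∑ x, min t (repr17 A B x) + t * t := by
  induction n using Nat.strong_induction_on with
  | _ n ih =>
  intro A B t hn hA hB hAB
  rcases Nat.eq_zero_or_pos t with rfl | ht
  · simp
  rcases hB.eq_or_lt with h | hlt
  · have : ∑ x, min t (repr17 A B x) = A.card * B.card := by
      rw [← repr17_sum]
      apply Finset.sum_congr rfl
      intro x _
      apply min_eq_right
      rw [h]
      exact repr17_le A B x
    rw [this, ← h]
    apply le_of_eq
    ring
  -- find the shift
  have hAne : A.Nonempty := Finset.card_pos.mp (by omega)
  have hBne : B.Nonempty := Finset.card_pos.mp (by omega)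
  obtain ⟨b, hb⟩ := hBne
  have hcd := ZMod.cauchy_davenport hN hAne ⟨b, hb⟩
  have hex : ∃ a ∈ A, ∃ b' ∈ B, a + b' - b ∉ A := by
    by_contra! hcon
    have hsub : (Finset.image₂ (· + ·) A B) ⊆ A.image (· + b) := by
      intro y hy
      obtain ⟨a, ha, b', hb', rfl⟩ := Finset.mem_image₂.mp hy
      exact Finset.mem_image.mpr ⟨_, hcon a ha b' hb', by ring⟩
    have h1 := (Finset.card_le_card hsub).trans Finset.card_image_le
    have h2 := hcd.trans h1
    rcases min_le_iff.mp h2 with h3 | h3 <;> omega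
  obtain ⟨a, ha, b', hb', hnot⟩ := hex
  set C := B.image (· + (a - b)) with hC
  have hCc : C.card = B.card := Finset.card_image_of_injective _ (add_left_injective _)
  rw [← repr17_shift A B (a - b) t, ← hC, ← hCc]
  have haC : a ∈ C := Finset.mem_image.mpr ⟨b, hb, by ring⟩
  have hbC : a + b' - b ∈ C := Finset.mem_image.mpr ⟨b', hb', by ring⟩
  have hui := Finset.card_union_add_card_inter A C
  have hAs := Finset.card_sdiff_add_card_inter A C
  have hCs := Finset.card_sdiff_add_card_inter C A
  rw [Finset.inter_comm C A] at hCs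
  have hI : 0 < (A ∩ C).card := Finset.card_pos.mpr ⟨a, by simp [ha, haC]⟩
  have hD : 0 < (C \ A).card := Finset.card_pos.mpr ⟨a + b' - b, by simp [hnot, hbC]⟩
  have hUA : A.card ≤ (A ∪ C).card := Finset.card_le_card Finset.subset_union_left
  rcases le_or_gt t (A ∩ C).card with hti | hti
  · have := ih (A ∩ C).card (by omega) (A ∪ C) (A ∩ C) t rfl (by omega) hti (by omega)
    rw [hui] at this
    refine this.trans ?_
    gcongr with x
    rw [repr17_split A C x]
    omega
  · obtain ⟨s, hs⟩ := Nat.exists_eq_add_of_lt hti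
    have h2 := ih (C \ A).card (by omega) (A \ C) (C \ A) (s + 1) rfl (by omega) (by omega) (by omega)
    have h1 := repr17_sum (A ∪ C) (A ∩ C)
    have h3 : ∑ x, repr17 (A ∪ C) (A ∩ C) x + ∑ x, min (s + 1) (repr17 (A \ C) (C \ A) x)
        ≤ ∑ x, min t (repr17 A C x) := by
      rw [← Finset.sum_add_distrib]
      gcongr with x
      rw [repr17_split A C x]
      have := repr17_le (A ∪ C) (A ∩ C) x
      omega
    rw [h1] at h3
    generalize ∑ x, min t (repr17 A C x) = S at *
    generalize ∑ x, min (s + 1) (repr17 (A \ C) (C \ A) x) = S' at *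
    generalize (A ∩ C).card = i at *
    generalize (A ∪ C).card = u at *
    generalize (A \ C).card = a1 at *
    generalize (C \ A).card = c1 at *
    have e1 : u = a1 + c1 + i := by omega
    rw [← hAs, ← hCs, hs]
    rw [e1] at h3
    nlinarith

theorem pollard17' {N : ℕ} [NeZero N] (hN : N.Prime) (A B : Finset (ZMod N)) (t : ℕ)
    (hA : t ≤ A.card) (hB : t ≤ B.card) :
    t * (min (A.card + B.card) (N + t)) ≤ ∑ x, min t (repr17 A B x) + t * t := by
  rcases le_total (A.card + B.card) (N + t) with h | h
  · rw [min_eq_left h]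
    exact pollard17 hN _ A B t rfl hA hB h
  · rw [min_eq_right h]
    have hAN : A.card ≤ N := by simpa [ZMod.card] using Finset.card_le_univ A
    obtain ⟨B', hsub, hc⟩ := Finset.exists_subset_card_eq (s := B) (n := N + t - A.card) (by omega)
    have := pollard17 hN _ A B' t rfl hA (by omega) (by omega)
    rw [show A.card + B'.card = N + t by omega] at this
    refine this.trans ?_
    gcongr with x
    exact repr17_mono A B B' hsub x

theorem count17 {N : ℕ} [NeZero N] (A B C : Finset (ZMod N)) (x : ZMod N) :
    ((A ×ˢ B ×ˢ C).filter
      (fun p : ZMod N × ZMod N × ZMod N => p.1 + p.2.1 + p.2.2 = x)).card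
      = ∑ y ∈ C, repr17 A B (x - y) := by
  unfold repr17
  rw [← Finset.card_sigma]
  symm
  apply Finset.card_bij' (fun (q : (_ : ZMod N) × ZMod N) _ => (q.2, x - q.1 - q.2, q.1))
    (fun p _ => ⟨p.2.2, p.1⟩)
  · rintro ⟨c, a⟩ h
    simp at h
    simp [h]
  · rintro ⟨a, b, c⟩ h
    simp at h
    obtain ⟨⟨h1, h2, h3⟩, rfl⟩ := h
    simp [h1, h2, h3]
  · rintro ⟨c, a⟩ h
    simp
  · rintro ⟨a, b, c⟩ h
    simp at h
    obtain ⟨⟨h1, h2, h3⟩, rfl⟩ := h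
    simp

theorem count17_ge {N : ℕ} [NeZero N] (A B C : Finset (ZMod N)) (x : ZMod N) (t : ℕ) :
    ∑ z, min t (repr17 A B z) + t * C.card ≤ ∑ y ∈ C, repr17 A B (x - y) + t * N := by
  rw [← Equiv.sum_comp (Equiv.subLeft x), ← Finset.sum_add_sum_compl C]
  have h1 : ∑ y ∈ C, min t (repr17 A B (Equiv.subLeft x y)) ≤ ∑ y ∈ C, repr17 A B (x - y) := by
    gcongr with y
    simp
  have h2 : ∑ y ∈ Cᶜ, min t (repr17 A B (Equiv.subLeft x y)) ≤ Cᶜ.card * t := by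
    rw [← smul_eq_mul]
    apply Finset.sum_le_card_nsmul
    intro y _
    simp
  have h3 : C.card + Cᶜ.card = N := by rw [Finset.card_add_card_compl, ZMod.card]
  have h4 : t * N = t * C.card + Cᶜ.card * t := by
    have : t * (C.card + Cᶜ.card) = t * N := congrArg (t * ·) h3
    rw [← this]
    ring
  omega

/-- Quantitative Cauchy–Davenport-type lemma: for every `θ > 0` there are `N(θ)` and
`c(θ) > 0` such that for every prime `N ≥ N(θ)` and `X₁, X₂, X₃ ⊆ ℤ/Nℤ` with
`min(θ₁, θ₂, θ₃, θ₁ + θ₂ + θ₃ - 1) ≥ θ` (where `θᵢ = |Xᵢ|/N`), every `x ∈ ℤ/Nℤ` has at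
least `c(θ)N²` representations `x = x₁ + x₂ + x₃` with `xᵢ ∈ Xᵢ`. -/
theorem stmt17 (θ : ℝ) (hθ : 0 < θ) :
    ∃ N₀ : ℕ, ∃ c : ℝ, 0 < c ∧
      ∀ (N : ℕ) [NeZero N], N.Prime → N₀ ≤ N →
        ∀ X₁ X₂ X₃ : Finset (ZMod N),
          min ((X₁.card : ℝ) / N)
            (min ((X₂.card : ℝ) / N)
              (min ((X₃.card : ℝ) / N)
                ((X₁.card : ℝ) / N + (X₂.card : ℝ) / N + (X₃.card : ℝ) / N - 1))) ≥ θ →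
          ∀ x : ZMod N,
            c * (N : ℝ) ^ 2 ≤
              (((X₁ ×ˢ X₂ ×ˢ X₃).filter
                (fun p : ZMod N × ZMod N × ZMod N => p.1 + p.2.1 + p.2.2 = x)).card : ℝ) := by
  obtain ⟨N₀, hN₀⟩ := exists_nat_ge (4 / θ)
  refine ⟨N₀, θ ^ 2 / 8, by positivity, ?_⟩
  intro N _ hN hNN X₁ X₂ X₃ h x
  have hNpos : (0 : ℝ) < N := by exact_mod_cast hN.pos
  simp only [ge_iff_le, le_min_iff] at h
  obtain ⟨h1, h2, h3, h4⟩ := h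
  have h4' : θ * N ≤ X₁.card + X₂.card + X₃.card - N := by
    rw [← add_div, ← add_div, div_sub_one hNpos.ne', le_div_iff₀ hNpos] at h4
    exact h4
  rw [le_div_iff₀ hNpos] at h1 h2 h3
  have hbig : 4 ≤ θ * N := by
    have : 4 / θ ≤ N := hN₀.trans (by exact_mod_cast hNN)
    rw [div_le_iff₀ hθ] at this
    linarith
  set t := ⌊θ * N / 2⌋₊ with ht
  have ht1 : (t : ℝ) ≤ θ * N / 2 := Nat.floor_le (by positivity)
  have ht2 : θ * N / 2 < t + 1 := Nat.lt_floor_add_one _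
  have ht3 : θ * N / 4 ≤ t := by linarith
  have hp := pollard17' hN X₁ X₂ t
    (by have : (t : ℝ) ≤ X₁.card := by linarith
        exact_mod_cast this)
    (by have : (t : ℝ) ≤ X₂.card := by linarith
        exact_mod_cast this)
  have hc := count17_ge X₁ X₂ X₃ x t
  rw [count17]
  generalize ∑ y ∈ X₃, repr17 X₁ X₂ (x - y) = R at *
  have hR : t * (min (X₁.card + X₂.card) (N + t)) + t * X₃.card ≤ R + t * N + t * t := by omega
  have hR' : (t : ℝ) * (min ((X₁.card : ℝ) + X₂.card) (N + t)) + t * X₃.card ≤ R + t * N + t * t := by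
    exact_mod_cast hR
  have hm : θ * N / 2 + N + t - X₃.card ≤ min ((X₁.card : ℝ) + X₂.card) (N + t) := by
    apply le_min <;> linarith
  have ht0 : (0 : ℝ) ≤ t := by positivity
  have hm2 := mul_le_mul_of_nonneg_left hm ht0
  have hm3 := mul_le_mul_of_nonneg_right ht3 (show 0 ≤ θ * N / 2 by positivity)
  nlinarith
end
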